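/- Let K be an infinite field and G a graph such that gdim(G)−1 equals the maximum size of a set of pairwise disconnected edges of G. Then ara(J(G)S_m) = gdim(G). -/

import Mathlib

open MvPolynomial

/-- The irrelevant maximal ideal `m = (x_1, …, x_n)` of `S = K[x_1,…,x_n]`. -/
noncomputable def mIdeal (K : Type*) [Field K] (n : ℕ) : Ideal (MvPolynomial (Fin n) K) :=
  Ideal.span (Set.range MvPolynomial.X)

theorem mIdeal_eq_ker (K : Type*) [Field K] (n : ℕ) :
    mIdeal K n = RingHom.ker (constantCoeff : MvPolynomial (Fin n) K →+* K) := by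
  apply le_antisymm
  · rw [mIdeal, Ideal.span_le]
    rintro _ ⟨i, rfl⟩
    simp [RingHom.mem_ker]
  · intro p hp
    rw [RingHom.mem_ker] at hp
    rw [mIdeal, ← Set.image_univ, mem_ideal_span_X_image]
    intro m hm
    by_contra h
    push_neg at h
    have hm0 : m = 0 := by
      ext i
      exact h i (Set.mem_univ i)
    subst hm0
    exact (mem_support_iff.mp hm) (by simpa [constantCoeff_eq] using hp)

instance mIdeal_isMaximal (K : Type*) [Field K] (n : ℕ) : (mIdeal K n).IsMaximal := by
  rw [mIdeal_eq_ker]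
  exact RingHom.ker_isMaximal_of_surjective _ fun a => ⟨MvPolynomial.C a, by simp⟩

instance mIdeal_isPrime (K : Type*) [Field K] (n : ℕ) : (mIdeal K n).IsPrime :=
  (mIdeal_isMaximal K n).isPrime

/-- The localization `S_m` of the polynomial ring at the irrelevant maximal ideal. -/
noncomputable abbrev SLoc (K : Type*) [Field K] (n : ℕ) : Type _ :=
  Localization.AtPrime (mIdeal K n)

/-- The cover ideal `J(G) = ⋂_{{i,j} ∈ E} (x_i, x_j)`. -/
noncomputable def coverIdeal (K : Type*) [Field K] {n : ℕ} (G : SimpleGraph (Fin n)) :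
    Ideal (MvPolynomial (Fin n) K) :=
  ⨅ e ∈ G.edgeSet, Ideal.span (MvPolynomial.X '' {v : Fin n | v ∈ e})

/-- The arithmetical rank of an ideal: the least `r` such that some `r` elements generate an
ideal with the same radical. -/
noncomputable def ara {R : Type*} [CommRing R] (I : Ideal R) : ℕ :=
  sInf {r : ℕ | ∃ f : Fin r → R, Ideal.radical (Ideal.span (Set.range f)) = Ideal.radical I}

/-- A free parameter pair. -/
def IsFreeParameterPair {n r : ℕ} (G : SimpleGraph (Fin n)) (a b : Fin r → Fin n) : Prop :=
  Function.Injective a ∧ Function.Injective b ∧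
  (∀ i j : Fin r, ¬ G.Adj (a i) (a j)) ∧
  (∀ i j : Fin r, a i ≠ b j) ∧
  (∀ i : Fin r, G.Adj (a i) (b i)) ∧
  (∀ i j : Fin r, G.Adj (a i) (b j) → i ≤ j)

/-- `G` has a free parameter set of cardinality `r`. -/
def HasFreeParameterSet {n : ℕ} (G : SimpleGraph (Fin n)) (r : ℕ) : Prop :=
  ∃ a b : Fin r → Fin n, IsFreeParameterPair G a b

/-- The graphical dimension. -/
noncomputable def gdim {n : ℕ} (G : SimpleGraph (Fin n)) : ℕ :=
  sSup {r : ℕ | HasFreeParameterSet G r} + 1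

/-- `G` has `r` pairwise disconnected edges: pairwise disjoint edges with no edge of `G`
joining a vertex of one of them to a vertex of another. -/
def HasPairwiseDisconnectedEdges {n : ℕ} (G : SimpleGraph (Fin n)) (r : ℕ) : Prop :=
  ∃ e : Fin r → Fin n × Fin n, (∀ i, G.Adj (e i).1 (e i).2) ∧
    ∀ i j : Fin r, i ≠ j →
      (e i).1 ≠ (e j).1 ∧ (e i).1 ≠ (e j).2 ∧ (e i).2 ≠ (e j).1 ∧ (e i).2 ≠ (e j).2 ∧
      ¬ G.Adj (e i).1 (e j).1 ∧ ¬ G.Adj (e i).1 (e j).2 ∧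
      ¬ G.Adj (e i).2 (e j).1 ∧ ¬ G.Adj (e i).2 (e j).2

/-- The maximum size of a set of pairwise disconnected edges of `G`. -/
noncomputable def maxPairwiseDisconnected {n : ℕ} (G : SimpleGraph (Fin n)) : ℕ :=
  sSup {r : ℕ | HasPairwiseDisconnectedEdges G r}

section Covers

variable {n : ℕ} (G : SimpleGraph (Fin n))

/-- An exponent vector is a `c`-cover if its values sum to at least `c` along every edge. -/
def IsCover (c : ℕ) (α : Fin n →₀ ℕ) : Prop :=
  ∀ v w, G.Adj v w → c ≤ α v + α w

variable {G}

theorem IsCover.mono {c : ℕ} {α β : Fin n →₀ ℕ} (hα : IsCover G c α) (h : α ≤ β) :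
    IsCover G c β := fun v w hvw =>
  (hα v w hvw).trans (add_le_add (h v) (h w))

theorem IsCover.add {c d : ℕ} {α β : Fin n →₀ ℕ} (hα : IsCover G c α) (hβ : IsCover G d β) :
    IsCover G (c + d) (α + β) := fun v w hvw => by
  have h₁ := hα v w hvw
  have h₂ := hβ v w hvw
  simp only [Finsupp.add_apply]
  omega

/-- A cover of even weight splits off a `2`-cover. -/
theorem IsCover.exists_add {k : ℕ} {α : Fin n →₀ ℕ} (hα : IsCover G (2 * (k + 1)) α) :
    ∃ β γ, IsCover G 2 β ∧ IsCover G (2 * k) γ ∧ β + γ = α := by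
  let β : Fin n →₀ ℕ := Finsupp.equivFunOnFinite.symm fun v =>
    if α v < k + 1 then 0 else if α v = k + 1 then 1 else 2
  have hβ : ∀ v, β v = if α v < k + 1 then 0 else if α v = k + 1 then 1 else 2 := fun v => rfl
  refine ⟨β, α - β, fun v w hvw => ?_, fun v w hvw => ?_, ?_⟩
  · have := hα v w hvw
    rw [hβ, hβ]
    split_ifs <;> omega
  · have := hα v w hvw
    simp only [Finsupp.tsub_apply, hβ]
    split_ifs <;> omega
  · ext v
    simp only [Finsupp.add_apply, Finsupp.tsub_apply, hβ]
    split_ifs <;> omega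

/-- Every vertex lies on an edge along which a minimal cover is tight. -/
theorem exists_tight_of_minimal (hiso : ∀ v, ∃ w, G.Adj v w) {c : ℕ} {α : Fin n →₀ ℕ}
    (hα : Minimal (IsCover G c) α) (v : Fin n) : ∃ w, G.Adj v w ∧ α v + α w = c := by
  have key : ∀ u, α u ≠ 0 → ∃ w, G.Adj u w ∧ α u + α w = c := by
    intro u hu
    by_contra! hcon
    have hcov : IsCover G c (α - Finsupp.single u 1) := by
      intro x y hxy
      have hle := hα.prop x y hxy
      have hne : x ≠ y := hxy.ne
      simp only [Finsupp.tsub_apply]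
      by_cases hx : x = u
      · subst hx
        have := hcon y hxy
        rw [Finsupp.single_eq_same, Finsupp.single_eq_of_ne hne.symm]
        omega
      · by_cases hy : y = u
        · subst hy
          have := hcon x hxy.symm
          rw [Finsupp.single_eq_same, Finsupp.single_eq_of_ne hne]
          omega
        · rw [Finsupp.single_eq_of_ne hx, Finsupp.single_eq_of_ne hy]
          omega
    have := hα.le_of_le hcov tsub_le_self u
    simp only [Finsupp.tsub_apply, Finsupp.single_eq_same] at this
    omega
  by_cases hv : α v = 0
  · obtain ⟨w, hw⟩ := hiso v
    have h₁ := hα.prop v w hw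
    by_cases hw0 : α w = 0
    · exact ⟨w, hw, by omega⟩
    · obtain ⟨u, -, hu⟩ := key w hw0
      exact ⟨w, hw, by omega⟩
  · exact key v hv

/-- The values of a minimal `c`-cover below `c / 2` index a free parameter set. -/
theorem hasFreeParameterSet_of_minimal (hiso : ∀ v, ∃ w, G.Adj v w) {c : ℕ} {α : Fin n →₀ ℕ}
    (hα : Minimal (IsCover G c) α) :
    HasFreeParameterSet G ((Finset.univ.image α).filter (2 * · < c)).card := by
  set T := (Finset.univ.image α).filter (2 * · < c) with hT
  let o : Fin T.card → ℕ := fun i => T.orderEmbOfFin rfl i.rev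
  have ho : ∀ i, o i ∈ T := fun i => T.orderEmbOfFin_mem rfl _
  have hanti : ∀ i j, o j ≤ o i → i ≤ j := fun i j h => by
    have : j.rev ≤ i.rev := (T.orderEmbOfFin rfl).le_iff_le.mp h
    exact Fin.rev_le_rev.mp this
  have hex : ∀ i, ∃ v, α v = o i := fun i => by
    have := ho i
    simp only [hT, Finset.mem_filter, Finset.mem_image, Finset.mem_univ, true_and] at this
    exact this.1
  have hlt : ∀ i, 2 * o i < c := fun i => by
    have := ho i
    rw [hT, Finset.mem_filter] at this
    exact this.2
  choose a ha using hex
  choose b hab hb using fun i => exists_tight_of_minimal hiso hα (a i)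
  have hb' : ∀ i, o i + α (b i) = c := fun i => by rw [← ha]; exact hb i
  refine ⟨a, b, fun i j hij => ?_, fun i j hij => ?_, fun i j hij => ?_, fun i j hij => ?_, hab,
    fun i j hij => ?_⟩
  · have : o i = o j := by rw [← ha, ← ha, hij]
    exact le_antisymm (hanti _ _ this.ge) (hanti _ _ this.le)
  · have h₁ := hb' i
    have h₂ := hb' j
    rw [hij] at h₁
    have : o i = o j := by omega
    exact le_antisymm (hanti _ _ this.ge) (hanti _ _ this.le)
  · have h := hα.prop _ _ hij
    rw [ha, ha] at h
    have := hlt i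
    have := hlt j
    omega
  · have h₁ := hb' j
    rw [← hij, ha] at h₁
    have := hlt i
    have := hlt j
    omega
  · have h := hα.prop _ _ hij
    rw [ha] at h
    have := hb' j
    exact hanti _ _ (by omega)

theorem HasFreeParameterSet.le {r : ℕ} (h : HasFreeParameterSet G r) : r ≤ n := by
  obtain ⟨a, b, ha, -⟩ := h
  simpa using Fintype.card_le_of_injective a ha

theorem HasFreeParameterSet.lt_gdim {r : ℕ} (h : HasFreeParameterSet G r) : r < gdim G :=
  Nat.lt_succ_of_le (le_csSup ⟨n, fun _ h' => HasFreeParameterSet.le h'⟩ h)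

/-- The number of minimal `c`-covers grows at most like `c ^ (gdim G - 1)`. -/
theorem exists_finset_minimal_card_le (hiso : ∀ v, ∃ w, G.Adj v w) (c : ℕ) :
    ∃ W : Finset (Fin n →₀ ℕ), (∀ α, Minimal (IsCover G c) α → α ∈ W) ∧
      W.card ≤ (c + 1) ^ (gdim G - 1) * (2 * (gdim G - 1) + 1) ^ n := by
  set r := gdim G - 1 with hr
  let decode : (Fin r → Fin (c + 1)) × (Fin n → Option (Fin r × Bool)) → (Fin n →₀ ℕ) :=
    fun p => Finsupp.equivFunOnFinite.symm fun v =>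
      match p.2 v with
      | none => c / 2
      | some (i, true) => p.1 i
      | some (i, false) => c - p.1 i
  refine ⟨Finset.univ.image decode, fun α hα => ?_, ?_⟩
  · set T := (Finset.univ.image α).filter (2 * · < c) with hT
    have hcard : T.card ≤ r := by
      have : T.card < gdim G := (hasFreeParameterSet_of_minimal hiso hα).lt_gdim
      omega
    obtain ⟨s, hs⟩ : ∃ s : Fin r → Fin (c + 1), ∀ t ∈ T, ∃ i, (s i : ℕ) = t := by
      refine ⟨fun i => if h : (i : ℕ) < T.card then
        ⟨T.orderEmbOfFin rfl ⟨i, h⟩, ?_⟩ else 0, fun t ht => ?_⟩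
      · have := T.orderEmbOfFin_mem rfl ⟨i, h⟩
        have h2 : 2 * T.orderEmbOfFin rfl ⟨i, h⟩ < c := (Finset.mem_filter.mp this).2
        omega
      · have : t ∈ Set.range (T.orderEmbOfFin rfl) := by
          rw [Finset.range_orderEmbOfFin]; exact ht
        obtain ⟨i, hi⟩ := this
        refine ⟨⟨i, i.2.trans_le hcard⟩, ?_⟩
        simp [hi]
    have hT' : ∀ v, 2 * α v < c → ∃ i, (s i : ℕ) = α v := fun v hv =>
      hs _ (Finset.mem_filter.mpr ⟨Finset.mem_image_of_mem _ (Finset.mem_univ v), hv⟩)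
    have hex : ∀ v, ∃ o : Option (Fin r × Bool), α v = match o with
      | none => c / 2
      | some (i, true) => (s i : ℕ)
      | some (i, false) => c - s i := by
      intro v
      rcases lt_trichotomy (2 * α v) c with h | h | h
      · obtain ⟨i, hi⟩ := hT' v h
        exact ⟨some (i, true), hi.symm⟩
      · exact ⟨none, by simp only; omega⟩
      · obtain ⟨w, -, hw⟩ := exists_tight_of_minimal hiso hα v
        obtain ⟨i, hi⟩ := hT' w (by omega)
        exact ⟨some (i, false), by simp only; omega⟩
    choose o ho using hex
    refine Finset.mem_image.mpr ⟨(s, o), Finset.mem_univ _, ?_⟩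
    ext v
    exact (ho v).symm
  · refine Finset.card_image_le.trans (le_of_eq ?_)
    simp [Finset.card_univ, mul_comm]

end Covers

section Reduction

variable {K S : Type*} [Field K] [CommRing S] [Algebra K S]

theorem Ideal.sup_pow_succ_le {A B F : Ideal S} (hF : F = A ⊔ B) (d : ℕ) :
    F ^ (d + 1) ≤ A * F ^ d ⊔ B ^ (d + 1) := by
  induction d with
  | zero => simp [hF]
  | succ d ih =>
    have hB : B ≤ F := hF ▸ le_sup_right
    calc F ^ (d + 1 + 1) = F ^ (d + 1) * F := pow_succ _ _
      _ ≤ (A * F ^ d ⊔ B ^ (d + 1)) * F := Ideal.mul_mono_left ih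
      _ = A * F ^ (d + 1) ⊔ B ^ (d + 1) * (A ⊔ B) := by
        rw [Ideal.sup_mul, mul_assoc, ← pow_succ, ← hF]
      _ ≤ A * F ^ (d + 1) ⊔ B ^ (d + 1 + 1) := by
        rw [Ideal.mul_sup, ← pow_succ B]
        refine sup_le le_sup_left (sup_le ?_ le_sup_right)
        rw [mul_comm]
        exact (Ideal.mul_mono_right (Ideal.pow_right_mono hB _)).trans le_sup_left

/-- Products of `d` factors from `F`, congruent factor by factor modulo `A`, agree modulo
`A * F ^ (d - 1)`. -/
theorem Ideal.prod_pow_sub_prod_pow_mem {ι : Type*} {A F : Ideal S} (hAF : A ≤ F) {f g : ι → S}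
    (hf : ∀ i, f i ∈ F) (hfg : ∀ i, f i - g i ∈ A) (s : Finset ι) (a : ι → ℕ) :
    (∏ i ∈ s, f i ^ a i) ∈ F ^ (∑ i ∈ s, a i) ∧ (∏ i ∈ s, g i ^ a i) ∈ F ^ (∑ i ∈ s, a i) ∧
      (∏ i ∈ s, f i ^ a i) - (∏ i ∈ s, g i ^ a i) ∈
        if (∑ i ∈ s, a i) = 0 then ⊥ else A * F ^ ((∑ i ∈ s, a i) - 1) := by
  let Rel : ℕ → S → S → Prop := fun d p q => p ∈ F ^ d ∧ q ∈ F ^ d ∧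
    p - q ∈ if d = 0 then ⊥ else A * F ^ (d - 1)
  have hmul : ∀ d e p q p' q', Rel d p q → Rel e p' q' → Rel (d + e) (p * p') (q * q') := by
    rintro d e p q p' q' ⟨hp, hq, hpq⟩ ⟨hp', hq', hpq'⟩
    refine ⟨pow_add F d e ▸ Ideal.mul_mem_mul hp hp', pow_add F d e ▸ Ideal.mul_mem_mul hq hq', ?_⟩
    rw [show p * p' - q * q' = (p - q) * p' + q * (p' - q') by ring]
    refine Ideal.add_mem _ ?_ ?_
    · rcases d with _ | d
      · have : p - q = 0 := by simpa using hpq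
        rw [this, zero_mul]
        exact Ideal.zero_mem _
      · rw [if_neg (by omega)] at hpq ⊢
        rw [show d + 1 + e - 1 = (d + 1 - 1) + e by omega, pow_add, ← mul_assoc]
        exact Ideal.mul_mem_mul hpq hp'
    · rcases e with _ | e
      · have : p' - q' = 0 := by simpa using hpq'
        rw [this, mul_zero]
        exact Ideal.zero_mem _
      · rw [if_neg (by omega)] at hpq' ⊢
        rw [show d + (e + 1) - 1 = (e + 1 - 1) + d by omega, pow_add, ← mul_assoc, mul_comm q]
        exact Ideal.mul_mem_mul hpq' hq
  have hone : Rel 0 1 1 := by simp [Rel]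
  have hg : ∀ i, g i ∈ F := fun i => by
    have := F.sub_mem (hf i) (hAF (hfg i))
    simpa using this
  have hpow : ∀ i k, Rel k (f i ^ k) (g i ^ k) := by
    intro i k
    induction k with
    | zero => simpa using hone
    | succ k ih =>
      rw [pow_succ, pow_succ]
      exact hmul _ _ _ _ _ _ ih ⟨by simpa using hf i, by simpa using hg i, by simpa using hfg i⟩
  change Rel _ _ _
  classical
  induction s using Finset.induction_on with
  | empty => simpa using hone
  | insert i s hi ih =>
    rw [Finset.prod_insert hi, Finset.prod_insert hi, Finset.sum_insert hi]
    exact hmul _ _ _ _ _ _ (hpow _ _) ih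

theorem MvPolynomial.IsHomogeneous.sum_eq {σ : Type*} [Fintype σ] {P : MvPolynomial σ K} {d : ℕ}
    (hP : P.IsHomogeneous d) {a : σ →₀ ℕ} (ha : a ∈ P.support) : ∑ i, a i = d := by
  have := hP (mem_support_iff.mp ha)
  rw [← this, Finsupp.weight_apply, Finsupp.sum_fintype _ _ (by simp)]
  simp

/-- A homogeneous relation modulo `m * I ^ d` among the generators of a reduction of `I` allows to
drop one of the generators, after a general linear change. -/
theorem exists_reduction_of_relation [Infinite K] {I m : Ideal S} {t k d : ℕ}
    {f : Fin (t + 1) → S} (hf : ∀ i, f i ∈ I)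
    (hred : I ^ (k + 1) ≤ Ideal.span (Set.range f) * I ^ k ⊔ m * I ^ (k + 1))
    {P : MvPolynomial (Fin (t + 1)) K} (hP : P.IsHomogeneous (d + 1)) (hP0 : P ≠ 0)
    (hrel : aeval f P ∈ m * I ^ (d + 1)) :
    ∃ g : Fin t → S, (∀ i, g i ∈ I) ∧
      ∃ l, I ^ (l + 1) ≤ Ideal.span (Set.range g) * I ^ l ⊔ m * I ^ (l + 1) := by
  obtain ⟨a, ha⟩ : ∃ a : Fin (t + 1) → K, eval a (P * X 0) ≠ 0 := by
    by_contra! h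
    exact mul_ne_zero hP0 (X_ne_zero 0) (MvPolynomial.funext fun x => by rw [h x, map_zero])
  rw [map_mul, eval_X] at ha
  have ha0 : a 0 ≠ 0 := right_ne_zero_of_mul ha
  have haP : eval a P ≠ 0 := left_ne_zero_of_mul ha
  let b : Fin (t + 1) → S := fun i => (a i / a 0) • f 0
  let g : Fin t → S := fun i => f i.succ - b i.succ
  set F := Ideal.span (Set.range f) with hF
  set A := Ideal.span (Set.range g) with hA
  have hfF : ∀ i, f i ∈ F := fun i => Ideal.subset_span ⟨i, rfl⟩
  have hsmul : ∀ (J : Ideal S) (c : K) (x : S), x ∈ J → c • x ∈ J := fun J c x hx => by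
    rw [Algebra.smul_def]
    exact J.mul_mem_left _ hx
  have hbF : ∀ i, b i ∈ F := fun i => hsmul _ _ _ (hfF 0)
  have hgF : ∀ i, g i ∈ F := fun i => F.sub_mem (hfF _) (hbF _)
  have hAF : A ≤ F := Ideal.span_le.mpr (by rintro _ ⟨i, rfl⟩; exact hgF i)
  have hFI : F ≤ I := Ideal.span_le.mpr (by rintro _ ⟨i, rfl⟩; exact hf i)
  have hfb : ∀ i, f i - b i ∈ A := by
    refine Fin.cases ?_ fun i => Ideal.subset_span ⟨i, rfl⟩
    simp [b, ha0]
  have hFsup : F = A ⊔ Ideal.span {f 0} := by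
    apply le_antisymm
    · rw [hF, Ideal.span_le]
      rintro _ ⟨i, rfl⟩
      rw [← sub_add_cancel (f i) (b i)]
      exact add_mem (Ideal.mem_sup_left (hfb i))
        (Ideal.mem_sup_right (hsmul _ _ _ (Ideal.mem_span_singleton_self _)))
    · exact sup_le hAF ((Ideal.span_singleton_le_iff_mem _).mpr (hfF 0))
  have hdiff : aeval f P - aeval b P ∈ A * F ^ d := by
    rw [aeval_def, aeval_def, eval₂_eq', eval₂_eq', ← Finset.sum_sub_distrib]
    refine Ideal.sum_mem _ fun e he => ?_
    rw [← mul_sub]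
    refine Ideal.mul_mem_left _ _ ?_
    have := (Ideal.prod_pow_sub_prod_pow_mem hAF hfF hfb Finset.univ e).2.2
    rw [hP.sum_eq he] at this
    simpa using this
  have hbP : aeval b P = (eval a P / a 0 ^ (d + 1)) • f 0 ^ (d + 1) := by
    rw [aeval_def, eval₂_eq', eval_eq', Finset.sum_div, Finset.sum_smul]
    refine Finset.sum_congr rfl fun e he => ?_
    rw [mul_div_assoc, mul_smul, Algebra.smul_def]
    congr 1
    simp only [b, smul_pow, Finset.prod_smul]
    rw [Finset.prod_pow_eq_pow_sum, hP.sum_eq he]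
    congr 1
    rw [← hP.sum_eq he, ← Finset.prod_pow_eq_pow_sum, ← Finset.prod_div_distrib]
    exact Finset.prod_congr rfl fun i _ => div_pow _ _ _
  have hf0 : f 0 ^ (d + 1) ∈ A * F ^ d ⊔ m * I ^ (d + 1) := by
    have hne : eval a P / a 0 ^ (d + 1) ≠ 0 := div_ne_zero haP (pow_ne_zero _ ha0)
    have : aeval b P ∈ A * F ^ d ⊔ m * I ^ (d + 1) := by
      rw [← sub_sub_cancel (aeval f P) (aeval b P)]
      exact sub_mem (Ideal.mem_sup_right hrel) (Ideal.mem_sup_left hdiff)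
    rw [hbP] at this
    have := hsmul _ (eval a P / a 0 ^ (d + 1))⁻¹ _ this
    rwa [smul_smul, inv_mul_cancel₀ hne, one_smul] at this
  have hFd : F ^ (d + 1) ≤ A * I ^ d ⊔ m * I ^ (d + 1) := by
    have h₁ : A * F ^ d ≤ A * I ^ d := Ideal.mul_mono_right (Ideal.pow_right_mono hFI _)
    refine (Ideal.sup_pow_succ_le hFsup d).trans (sup_le (h₁.trans le_sup_left) ?_)
    rw [Ideal.span_singleton_pow, Ideal.span_singleton_le_iff_mem]
    exact sup_le_sup_right h₁ _ hf0
  have hiter : ∀ j, I ^ (k + j) ≤ F ^ j * I ^ k ⊔ m * I ^ (k + j) := by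
    intro j
    induction j with
    | zero => simp
    | succ j ih =>
      calc I ^ (k + (j + 1)) = I ^ (k + j) * I := by rw [← add_assoc, pow_succ]
        _ ≤ (F ^ j * I ^ k ⊔ m * I ^ (k + j)) * I := Ideal.mul_mono_left ih
        _ = F ^ j * I ^ (k + 1) ⊔ m * I ^ (k + (j + 1)) := by
          rw [Ideal.sup_mul, mul_assoc, mul_assoc, ← pow_succ, ← pow_succ, add_assoc]
        _ ≤ F ^ j * (F * I ^ k ⊔ m * I ^ (k + 1)) ⊔ m * I ^ (k + (j + 1)) :=
          sup_le_sup_right (Ideal.mul_mono_right hred) _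
        _ ≤ F ^ (j + 1) * I ^ k ⊔ m * I ^ (k + (j + 1)) := by
          rw [Ideal.mul_sup, ← mul_assoc, ← pow_succ]
          refine sup_le (sup_le le_sup_left ?_) le_sup_right
          refine le_trans ?_ le_sup_right
          calc F ^ j * (m * I ^ (k + 1)) ≤ I ^ j * (m * I ^ (k + 1)) :=
                Ideal.mul_mono_left (Ideal.pow_right_mono hFI _)
            _ = m * I ^ (k + (j + 1)) := by ring
  refine ⟨g, fun i => hFI (hgF i), k + d, ?_⟩
  calc I ^ (k + d + 1) ≤ F ^ (d + 1) * I ^ k ⊔ m * I ^ (k + d + 1) := hiter (d + 1)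
    _ ≤ (A * I ^ d ⊔ m * I ^ (d + 1)) * I ^ k ⊔ m * I ^ (k + d + 1) :=
      sup_le_sup_right (Ideal.mul_mono_left hFd) _
    _ = A * I ^ (k + d) ⊔ m * I ^ (k + d + 1) := by
      rw [Ideal.sup_mul, show A * I ^ d * I ^ k = A * I ^ (k + d) by ring,
        show m * I ^ (d + 1) * I ^ k = m * I ^ (k + d + 1) by ring, sup_assoc, sup_idem]

end Reduction

section CoverIdeals

variable (K : Type*) [Field K] {n : ℕ} (G : SimpleGraph (Fin n))

/-- The monomial ideal spanned by the `c`-covers of `G`. -/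
noncomputable def kCoverIdeal (c : ℕ) : Ideal (MvPolynomial (Fin n) K) :=
  Ideal.span ((fun α => monomial α (1 : K)) '' {α | IsCover G c α})

variable {K G}

theorem mem_kCoverIdeal {c : ℕ} {p : MvPolynomial (Fin n) K} :
    p ∈ kCoverIdeal K G c ↔ ∀ α ∈ p.support, IsCover G c α := by
  rw [kCoverIdeal, mem_ideal_span_monomial_image]
  exact ⟨fun h α hα => let ⟨β, hβ, hle⟩ := h α hα; IsCover.mono hβ hle,
    fun h α hα => ⟨α, h α hα, le_rfl⟩⟩

theorem monomial_mem_kCoverIdeal {c : ℕ} {α : Fin n →₀ ℕ} (hα : IsCover G c α) (a : K) :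
    monomial α a ∈ kCoverIdeal K G c := by
  rw [mem_kCoverIdeal]
  intro β hβ
  rw [Finset.mem_singleton.mp (support_monomial_subset hβ)]
  exact hα

theorem coverIdeal_eq_kCoverIdeal : coverIdeal K G = kCoverIdeal K G 1 := by
  ext p
  simp only [coverIdeal, Ideal.mem_iInf, mem_kCoverIdeal, mem_ideal_span_X_image]
  constructor
  · intro h α hα v w hvw
    obtain ⟨i, hi, hne⟩ := h s(v, w) hvw α hα
    rcases Sym2.mem_iff.mp hi with rfl | rfl <;> omega
  · intro h e he α hα
    induction e with
    | h v w =>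
      have := h α hα v w he
      by_cases hv : α v = 0
      · exact ⟨w, Sym2.mem_mk_right _ _, by omega⟩
      · exact ⟨v, Sym2.mem_mk_left _ _, hv⟩

theorem kCoverIdeal_mul_le (c d : ℕ) :
    kCoverIdeal K G c * kCoverIdeal K G d ≤ kCoverIdeal K G (c + d) := by
  rw [kCoverIdeal, kCoverIdeal, Ideal.span_mul_span', Ideal.span_le]
  rintro _ ⟨_, ⟨α, hα, rfl⟩, _, ⟨β, hβ, rfl⟩, rfl⟩
  simp only [monomial_mul]
  exact monomial_mem_kCoverIdeal (IsCover.add hα hβ) _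

theorem kCoverIdeal_two_pow (k : ℕ) : kCoverIdeal K G 2 ^ k = kCoverIdeal K G (2 * k) := by
  induction k with
  | zero =>
    rw [pow_zero, Ideal.one_eq_top, eq_comm, Ideal.eq_top_iff_one, mem_kCoverIdeal]
    intro α _ v w _
    omega
  | succ k ih =>
    rw [pow_succ', ih]
    apply le_antisymm
    · exact (kCoverIdeal_mul_le _ _).trans_eq (by congr 1; omega)
    · conv_lhs => rw [kCoverIdeal]
      rw [Ideal.span_le]
      rintro _ ⟨α, hα, rfl⟩
      obtain ⟨β, γ, hβ, hγ, rfl⟩ := IsCover.exists_add hα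
      have : monomial (β + γ) (1 : K) = monomial β 1 * monomial γ 1 := by simp [monomial_mul]
      simp only [this]
      exact Ideal.mul_mem_mul (monomial_mem_kCoverIdeal hβ _) (monomial_mem_kCoverIdeal hγ _)

theorem mem_mIdeal_mul_kCoverIdeal {c : ℕ} {p : MvPolynomial (Fin n) K}
    (hp : p ∈ kCoverIdeal K G c) (hmin : ∀ α, Minimal (IsCover G c) α → coeff α p = 0) :
    p ∈ mIdeal K n * kCoverIdeal K G c := by
  rw [p.as_sum]
  refine Ideal.sum_mem _ fun α hα => ?_
  obtain ⟨β, hle, hβ⟩ := exists_minimal_le_of_wellFoundedLT (IsCover G c) α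
    (mem_kCoverIdeal.mp hp α hα)
  have hne : β ≠ α := by
    rintro rfl
    exact mem_support_iff.mp hα (hmin β hβ)
  obtain ⟨i, hi⟩ : ∃ i, β i < α i := by
    by_contra! h
    exact hne (le_antisymm hle h)
  have hcov : IsCover G c (α - Finsupp.single i 1) := by
    refine hβ.prop.mono fun j => ?_
    have := hle j
    rcases eq_or_ne j i with rfl | hj
    · simp only [Finsupp.tsub_apply, Finsupp.single_eq_same]
      omega
    · simpa [Finsupp.single_eq_of_ne hj] using this
  have : monomial α (coeff α p) = X i * monomial (α - Finsupp.single i 1) (coeff α p) := by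
    rw [X, monomial_mul, one_mul, add_tsub_cancel_of_le]
    rw [Finsupp.single_le_iff]
    omega
  rw [this]
  exact Ideal.mul_mem_mul (Ideal.subset_span ⟨i, rfl⟩) (monomial_mem_kCoverIdeal hcov _)

/-- Any `t + 1` elements of the ideal of `2`-covers, `t` at least the graphical dimension, satisfy
a homogeneous relation modulo the irrelevant ideal. -/
theorem exists_relation_kCoverIdeal (hiso : ∀ v, ∃ w, G.Adj v w) {t : ℕ} (ht : gdim G ≤ t)
    {f : Fin (t + 1) → MvPolynomial (Fin n) K} (hf : ∀ i, f i ∈ kCoverIdeal K G 2) :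
    ∃ d, ∃ P : MvPolynomial (Fin (t + 1)) K, P.IsHomogeneous (d + 1) ∧ P ≠ 0 ∧
      aeval f P ∈ mIdeal K n * kCoverIdeal K G 2 ^ (d + 1) := by
  set r := gdim G - 1 with hr
  have hgd : 1 ≤ gdim G := by simp [gdim]
  set q := (2 * t) ^ r * (2 * r + 1) ^ n with hq
  have ht0 : 0 < t := by omega
  have hq0 : 0 < q := by positivity
  set D := t * q with hD
  have hD0 : 0 < D := Nat.mul_pos (by omega) hq0
  obtain ⟨W, hW, hcard⟩ := exists_finset_minimal_card_le hiso (2 * D)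
  let a : (Fin t → Fin (q + 1)) → (Fin (t + 1) →₀ ℕ) := fun u =>
    Finsupp.equivFunOnFinite.symm (Fin.cons (D - ∑ i, (u i : ℕ)) fun i => (u i : ℕ))
  have hinj : Function.Injective a := by
    intro u u' h
    funext i
    have := DFunLike.congr_fun h i.succ
    exact Fin.ext (by simpa [a] using this)
  have hdeg : ∀ u, ∑ i, a u i = D := by
    intro u
    have hle : ∑ i, (u i : ℕ) ≤ D := by
      refine (Finset.sum_le_card_nsmul _ _ q fun i _ => by omega).trans ?_
      simp [hD]
    rw [Fin.sum_univ_succ]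
    simp only [a, Finsupp.equivFunOnFinite_symm_apply_apply, Fin.cons_zero, Fin.cons_succ]
    omega
  let Q : ((Fin t → Fin (q + 1)) → K) →ₗ[K] MvPolynomial (Fin (t + 1)) K :=
    Fintype.linearCombination K fun u => monomial (a u) (1 : K)
  let φ : ((Fin t → Fin (q + 1)) → K) →ₗ[K] (W → K) :=
    LinearMap.pi fun w => lcoeff K (w : Fin n →₀ ℕ) ∘ₗ (aeval f).toLinearMap ∘ₗ Q
  have hlt : Module.finrank K (W → K) < Module.finrank K ((Fin t → Fin (q + 1)) → K) := by
    rw [Module.finrank_fintype_fun_eq_card, Module.finrank_fintype_fun_eq_card]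
    simp only [Fintype.card_coe, Fintype.card_pi, Fintype.card_fin, Finset.prod_const,
      Finset.card_univ]
    calc W.card ≤ (2 * D + 1) ^ r * (2 * r + 1) ^ n := hcard
      _ ≤ ((2 * t) * (q + 1)) ^ r * (2 * r + 1) ^ n := by
        gcongr
        rw [hD]
        nlinarith
      _ = (q + 1) ^ r * q := by rw [mul_pow, hq]; ring
      _ < (q + 1) ^ r * (q + 1) := by gcongr; omega
      _ = (q + 1) ^ (r + 1) := (pow_succ _ _).symm
      _ ≤ (q + 1) ^ t := Nat.pow_le_pow_right (by omega) (by omega)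
  obtain ⟨c, hc, hc0⟩ := Submodule.exists_mem_ne_zero_of_ne_bot
    (LinearMap.ker_ne_bot_of_finrank_lt (f := φ) hlt)
  have hQ : Q c = ∑ u, monomial (a u) (c u) := by
    simp [Q, Fintype.linearCombination_apply, smul_monomial]
  have hcoeff : ∀ u, coeff (a u) (Q c) = c u := by
    intro u
    rw [hQ, coeff_sum, Finset.sum_eq_single u]
    · simp
    · intro u' _ hne
      rw [coeff_monomial, if_neg (hinj.ne hne)]
    · simp
  have hhom : (Q c).IsHomogeneous D := by
    rw [hQ]
    refine IsHomogeneous.sum _ _ _ fun u _ => isHomogeneous_monomial _ ?_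
    rw [← hdeg u, Finsupp.degree_eq_sum]
  have hmem : aeval f (Q c) ∈ kCoverIdeal K G 2 ^ D := by
    rw [aeval_def, eval₂_eq']
    refine Ideal.sum_mem _ fun e he => Ideal.mul_mem_left _ _ ?_
    rw [← hhom.sum_eq he, ← Finset.prod_pow_eq_pow_sum]
    exact Ideal.prod_mem_prod fun i _ => Ideal.pow_mem_pow (hf i) _
  obtain ⟨d, hd⟩ : ∃ d, D = d + 1 := ⟨D - 1, by omega⟩
  refine ⟨d, Q c, hd ▸ hhom, ?_, ?_⟩
  · intro h0
    exact hc0 (funext fun u => by rw [← hcoeff, h0, coeff_zero, Pi.zero_apply])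
  · rw [← hd, kCoverIdeal_two_pow] at *
    refine mem_mIdeal_mul_kCoverIdeal hmem fun α hα => ?_
    exact congr_fun (LinearMap.mem_ker.mp hc) ⟨α, hW α hα⟩

/-- The ideal of `2`-covers has a reduction, modulo the irrelevant ideal, with `gdim G`
generators. -/
theorem exists_reduction_kCoverIdeal [Infinite K] (hiso : ∀ v, ∃ w, G.Adj v w) :
    ∃ t ≤ gdim G, ∃ f : Fin t → MvPolynomial (Fin n) K, (∀ i, f i ∈ kCoverIdeal K G 2) ∧
      ∃ k, kCoverIdeal K G 2 ^ (k + 1) ≤ Ideal.span (Set.range f) * kCoverIdeal K G 2 ^ k ⊔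
        mIdeal K n * kCoverIdeal K G 2 ^ (k + 1) := by
  obtain ⟨t, ht⟩ : ∃ t, ∃ f : Fin t → MvPolynomial (Fin n) K, (∀ i, f i ∈ kCoverIdeal K G 2) ∧
      ∃ k, kCoverIdeal K G 2 ^ (k + 1) ≤ Ideal.span (Set.range f) * kCoverIdeal K G 2 ^ k ⊔
        mIdeal K n * kCoverIdeal K G 2 ^ (k + 1) := by
    obtain ⟨t, f, hf⟩ := Submodule.fg_iff_exists_fin_generating_family.mp
      (IsNoetherian.noetherian (kCoverIdeal K G 2))
    refine ⟨t, f, fun i => hf ▸ Submodule.subset_span ⟨i, rfl⟩, 0, ?_⟩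
    rw [Ideal.span, hf]
    simp
  induction t with
  | zero => exact ⟨0, Nat.zero_le _, ht⟩
  | succ t ih =>
    by_cases hle : t + 1 ≤ gdim G
    · exact ⟨t + 1, hle, ht⟩
    · obtain ⟨f, hf, k, hk⟩ := ht
      obtain ⟨d, P, hP, hP0, hrel⟩ := exists_relation_kCoverIdeal hiso (by omega) hf
      exact ih (exists_reduction_of_relation hf hk hP hP0 hrel)

/-- The localized cover ideal is generated up to radical by at most `gdim G` elements. -/
theorem exists_ara_coverIdeal_le [Infinite K] (hiso : ∀ v, ∃ w, G.Adj v w) :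
    ∃ t ≤ gdim G, ∃ f : Fin t → SLoc K n, (Ideal.span (Set.range f)).radical =
      ((coverIdeal K G).map (algebraMap (MvPolynomial (Fin n) K) (SLoc K n))).radical := by
  obtain ⟨t, ht, f, hf, k, hk⟩ := exists_reduction_kCoverIdeal (K := K) hiso
  refine ⟨t, ht, fun i => algebraMap _ _ (f i), ?_⟩
  set φ := algebraMap (MvPolynomial (Fin n) K) (SLoc K n)
  have hspan : Ideal.span (Set.range fun i => φ (f i)) = (Ideal.span (Set.range f)).map φ := by
    rw [Ideal.map_span, ← Set.range_comp]
    rfl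
  have hIJ : kCoverIdeal K G 2 ≤ coverIdeal K G := fun p hp => by
    rw [coverIdeal_eq_kCoverIdeal, mem_kCoverIdeal]
    exact fun α hα v w hvw => le_trans (by omega) (mem_kCoverIdeal.mp hp α hα v w hvw)
  have hJI : coverIdeal K G ^ 2 ≤ kCoverIdeal K G 2 := by
    rw [coverIdeal_eq_kCoverIdeal, sq]
    exact kCoverIdeal_mul_le 1 1
  have hfI : Ideal.span (Set.range f) ≤ kCoverIdeal K G 2 :=
    Ideal.span_le.mpr (by rintro _ ⟨i, rfl⟩; exact hf i)
  have hpow : (kCoverIdeal K G 2 ^ (k + 1)).map φ ≤ (Ideal.span (Set.range f)).map φ := by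
    refine Submodule.le_of_le_smul_of_le_jacobson_bot (I := (mIdeal K n).map φ)
      (IsNoetherian.noetherian _) ?_ ?_
    · rw [IsLocalRing.jacobson_eq_maximalIdeal _ bot_ne_top]
      exact (Localization.AtPrime.map_eq_maximalIdeal).le
    · rw [smul_eq_mul, ← Ideal.map_mul, ← Ideal.map_sup]
      exact Ideal.map_mono (hk.trans (sup_le_sup_right Ideal.mul_le_left _))
  rw [hspan]
  apply le_antisymm
  · exact Ideal.radical_mono (Ideal.map_mono (hfI.trans hIJ))
  · rw [← Ideal.radical_pow _ (show 2 * (k + 1) ≠ 0 by omega), ← Ideal.map_pow]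
    refine Ideal.radical_mono (le_trans (Ideal.map_mono ?_) hpow)
    rw [pow_mul]
    exact Ideal.pow_right_mono hJI _

end CoverIdeals

section LocalizedComplexes

universe u

/-- A complex over the field `L` with subcomplexes `F g`, `g : R`, graded by degree, that behave
like the localizations at `g` of a complex of `R`-modules. -/
structure LocComplex (R L : Type u) [CommRing R] [Field L] [Algebra R L] where
  M : Type u
  [addCommGroup : AddCommGroup M]
  [module : Module L M]
  d : M →ₗ[L] M
  F : R → ℤ → AddSubgroup M
  d_d : ∀ x, d (d x) = 0
  d_mem : ∀ {g n x}, x ∈ F g n → d x ∈ F g (n + 1)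
  smul_mem : ∀ {g n x} (r : R), x ∈ F g n → algebraMap R L r • x ∈ F g n
  inv_mem : ∀ {g h n x}, h ∣ g → x ∈ F g n → (algebraMap R L h)⁻¹ • x ∈ F g n
  mono : ∀ {g h n} (k : ℕ), g ∣ h ^ k → F g n ≤ F h n
  clear : ∀ {g h n x}, x ∈ F (g * h) n → ∃ k : ℕ, algebraMap R L (h ^ k) • x ∈ F g n

attribute [instance] LocComplex.addCommGroup LocComplex.module

namespace LocComplex

variable {R L : Type u} [CommRing R] [Field L] [Algebra R L]

theorem clear_of_le (C : LocComplex R L) {g h : R} {n : ℤ} {x : C.M} {j k : ℕ} (hjk : j ≤ k)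
    (hx : algebraMap R L (h ^ j) • x ∈ C.F g n) : algebraMap R L (h ^ k) • x ∈ C.F g n := by
  obtain ⟨i, rfl⟩ := Nat.exists_eq_add_of_le hjk
  rw [add_comm, pow_add, map_mul, mul_smul]
  exact C.smul_mem _ hx

theorem F_le_mul (C : LocComplex R L) (g h : R) (n : ℤ) : C.F g n ≤ C.F (g * h) n :=
  C.mono 1 (by rw [pow_one]; exact dvd_mul_right _ _)

/-- Exactness in degree `n` of the localization at `g`. -/
def Ac (C : LocComplex R L) (g : R) (n : ℤ) : Prop :=
  ∀ x ∈ C.F g n, C.d x = 0 → ∃ y ∈ C.F g (n - 1), C.d y = x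

/-- Exactness is local. -/
theorem ac_of_local [FaithfulSMul R L] (C : LocComplex R L) {g : R} (hg : g ≠ 0) {n : ℤ} {s : Set R}
    (hs : g ∈ (Ideal.span s).radical) (h : ∀ f ∈ s, C.Ac (g * f) n) : C.Ac g n := by
  intro x hx hdx
  let I : Ideal R :=
    { carrier := {r | ∃ y ∈ C.F g (n - 1), C.d y = algebraMap R L r • x}
      add_mem' := by
        rintro a b ⟨y, hy, hya⟩ ⟨z, hz, hzb⟩
        exact ⟨y + z, add_mem hy hz, by rw [map_add, hya, hzb, map_add, add_smul]⟩
      zero_mem' := ⟨0, zero_mem _, by simp⟩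
      smul_mem' := by
        rintro c a ⟨y, hy, hya⟩
        exact ⟨algebraMap R L c • y, C.smul_mem c hy, by
          rw [map_smul, hya, smul_smul, smul_eq_mul, map_mul]⟩ }
  have hsI : Ideal.span s ≤ I.radical := by
    refine Ideal.span_le.mpr fun f hf => ?_
    obtain ⟨y, hy, hdy⟩ := h f hf x (C.F_le_mul g f n hx) hdx
    obtain ⟨k, hk⟩ := C.clear hy
    exact ⟨k, _, hk, by rw [map_smul, hdy]⟩
  obtain ⟨k, y, hy, hdy⟩ := Ideal.radical_le_radical_iff.mpr hsI hs
  have hgk : ∀ j : ℕ, (algebraMap R L (g ^ j))⁻¹ • y ∈ C.F g (n - 1) := by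
    intro j
    induction j with
    | zero => simpa using hy
    | succ j ih =>
      rw [pow_succ', map_mul, mul_inv, mul_smul]
      exact C.inv_mem dvd_rfl ih
  refine ⟨_, hgk k, ?_⟩
  have hne : algebraMap R L (g ^ k) ≠ 0 := by
    rw [map_pow]
    exact pow_ne_zero _ fun h0 => hg ((FaithfulSMul.algebraMap_eq_zero_iff R L).mp h0)
  rw [map_smul, hdy, smul_smul, inv_mul_cancel₀ hne, one_smul]

variable (L) in
/-- The localization `R[1/g]`, as a subgroup of `L`. -/
def locAt (g : R) : AddSubgroup L where
  carrier := {x | ∃ (k : ℕ) (a : R), algebraMap R L (g ^ k) * x = algebraMap R L a}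
  add_mem' := by
    rintro x y ⟨k, a, ha⟩ ⟨j, b, hb⟩
    refine ⟨k + j, g ^ j * a + g ^ k * b, ?_⟩
    simp only [map_add, map_mul, pow_add, ← ha, ← hb]
    ring
  zero_mem' := ⟨0, 0, by simp⟩
  neg_mem' := by
    rintro x ⟨k, a, ha⟩
    exact ⟨k, -a, by rw [mul_neg, ha, map_neg]⟩

variable (R L) in
/-- The field `L`, concentrated in degree zero and filtered by the localizations of `R`. -/
def base : LocComplex R L where
  M := L
  d := 0
  F g n := if n = 0 then locAt L g else ⊥
  d_d _ := rfl
  d_mem _ := zero_mem _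
  smul_mem := by
    intro g n x r hx
    split_ifs at hx ⊢
    · obtain ⟨k, a, ha⟩ := hx
      exact ⟨k, r * a, by rw [map_mul, ← ha, smul_eq_mul]; ring⟩
    · rw [AddSubgroup.mem_bot] at hx ⊢
      rw [hx, smul_zero]
  inv_mem := by
    rintro g h n x ⟨c, rfl⟩ hx
    split_ifs at hx ⊢
    · obtain ⟨k, a, ha⟩ := hx
      by_cases h0 : algebraMap R L h = 0
      · rw [h0, inv_zero, zero_smul]
        exact zero_mem _
      · refine ⟨k + 1, c * a, ?_⟩
        rw [pow_succ', map_mul, map_mul, map_mul, ← ha, smul_eq_mul]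
        field_simp
    · rw [AddSubgroup.mem_bot] at hx ⊢
      rw [hx, smul_zero]
  mono := by
    rintro g h n k ⟨c, hc⟩ x hx
    split_ifs at hx ⊢
    · obtain ⟨j, a, ha⟩ := hx
      refine ⟨k * j, c ^ j * a, ?_⟩
      rw [pow_mul, hc, mul_pow, map_mul, map_mul, ← ha]
      ring
    · exact hx
  clear := by
    intro g h n x hx
    split_ifs at hx ⊢
    · obtain ⟨k, a, ha⟩ := hx
      exact ⟨k, k, a, by rw [← ha, mul_pow, map_mul, smul_eq_mul]; ring⟩
    · rw [AddSubgroup.mem_bot] at hx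
      exact ⟨0, by rw [hx, smul_zero]; exact zero_mem _⟩

theorem mem_base_F_zero {g : R} {x : L} : x ∈ (base R L).F g 0 ↔ x ∈ locAt L g := by
  change x ∈ (if (0 : ℤ) = 0 then locAt L g else ⊥) ↔ _
  rw [if_pos rfl]

theorem base_ac_of_ne_zero (g : R) {n : ℤ} (hn : n ≠ 0) : (base R L).Ac g n := by
  intro x hx _
  change x ∈ (if n = 0 then locAt L g else (⊥ : AddSubgroup L)) at hx
  rw [if_neg hn] at hx
  exact ⟨0, zero_mem _, by rw [map_zero]; exact (AddSubgroup.mem_bot.mp hx).symm⟩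

/-- The fibre of the localization map `C → C[1/f]`. -/
def cone (f : R) (C : LocComplex R L) : LocComplex R L where
  M := C.M × C.M
  d := (C.d ∘ₗ LinearMap.fst L _ _).prod (LinearMap.fst L _ _ - C.d ∘ₗ LinearMap.snd L _ _)
  F g n := (C.F g n).prod (C.F (g * f) (n - 1))
  d_d x := by simp [C.d_d]
  d_mem := by
    rintro g n x ⟨h₁, h₂⟩
    refine ⟨C.d_mem h₁, sub_mem (H := C.F (g * f) (n + 1 - 1)) ?_ ?_⟩
    · rw [add_sub_cancel_right]
      exact C.F_le_mul _ _ _ h₁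
    · have := C.d_mem h₂
      rwa [sub_add_cancel, ← add_sub_cancel_right n 1] at this
  smul_mem := fun r hx => ⟨C.smul_mem r hx.1, C.smul_mem r hx.2⟩
  inv_mem := fun h hx => ⟨C.inv_mem h hx.1, C.inv_mem (h.mul_right _) hx.2⟩
  mono := by
    rintro g h n k hk x ⟨h₁, h₂⟩
    refine ⟨C.mono k hk h₁, C.mono (k + 1) ?_ h₂⟩
    rw [mul_pow, pow_succ f]
    exact mul_dvd_mul (hk.trans (pow_dvd_pow _ k.le_succ)) (dvd_mul_left _ _)
  clear := by
    rintro g h n x ⟨h₁, h₂⟩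
    obtain ⟨j, hj⟩ := C.clear h₁
    obtain ⟨k, hk⟩ := C.clear (mul_right_comm g h f ▸ h₂)
    exact ⟨max j k, C.clear_of_le (le_max_left _ _) hj, C.clear_of_le (le_max_right _ _) hk⟩

/-- The tensor product of `C` with the two-term complex `R[1/x] × R[1/y] → R[1/xy]`. -/
def cube (x y : R) (C : LocComplex R L) : LocComplex R L where
  M := C.M × C.M × C.M
  d := (C.d ∘ₗ LinearMap.fst L _ _).prod
    ((C.d ∘ₗ LinearMap.fst L _ _ ∘ₗ LinearMap.snd L _ _).prod
      (LinearMap.fst L _ _ ∘ₗ LinearMap.snd L _ _ - LinearMap.fst L _ _ -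
        C.d ∘ₗ LinearMap.snd L _ _ ∘ₗ LinearMap.snd L _ _))
  F g n := (C.F (g * x) n).prod ((C.F (g * y) n).prod (C.F (g * x * y) (n - 1)))
  d_d x := by simp [C.d_d]
  d_mem := by
    rintro g n z ⟨h₁, h₂, h₃⟩
    refine ⟨C.d_mem h₁, C.d_mem h₂, sub_mem (H := C.F (g * x * y) (n + 1 - 1)) ?_ ?_⟩
    · rw [add_sub_cancel_right]
      refine sub_mem ?_ (C.F_le_mul _ _ _ h₁)
      rw [mul_right_comm]
      exact C.F_le_mul _ _ _ h₂
    · have := C.d_mem h₃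
      rwa [sub_add_cancel, ← add_sub_cancel_right n 1] at this
  smul_mem := fun r hx => ⟨C.smul_mem r hx.1, C.smul_mem r hx.2.1, C.smul_mem r hx.2.2⟩
  inv_mem := fun h hx => ⟨C.inv_mem (h.mul_right _) hx.1, C.inv_mem (h.mul_right _) hx.2.1,
    C.inv_mem ((h.mul_right _).mul_right _) hx.2.2⟩
  mono := by
    rintro g h n k hk z ⟨h₁, h₂, h₃⟩
    have key : ∀ {a b : R}, a ∣ b ^ k → ∀ c, a * c ∣ (b * c) ^ (k + 1) := by
      intro a b hab c
      rw [mul_pow, pow_succ c]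
      exact mul_dvd_mul (hab.trans (pow_dvd_pow _ k.le_succ)) (dvd_mul_left _ _)
    refine ⟨C.mono (k + 1) (key hk x) h₁, C.mono (k + 1) (key hk y) h₂, C.mono (k + 1) ?_ h₃⟩
    rw [mul_assoc, mul_assoc]
    exact key hk _
  clear := by
    rintro g h n z ⟨h₁, h₂, h₃⟩
    obtain ⟨i, hi⟩ := C.clear (mul_right_comm g h x ▸ h₁)
    obtain ⟨j, hj⟩ := C.clear (mul_right_comm g h y ▸ h₂)
    obtain ⟨k, hk⟩ := C.clear (h := h) (g := g * x * y)
      (show z.2.2 ∈ C.F (g * x * y * h) (n - 1) by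
        rwa [show g * x * y * h = g * h * x * y by ring])
    exact ⟨max i (max j k), C.clear_of_le (le_max_left _ _) hi,
      C.clear_of_le ((le_max_left _ _).trans (le_max_right _ _)) hj,
      C.clear_of_le ((le_max_right _ _).trans (le_max_right _ _)) hk⟩

theorem cone_d_eq {f : R} {C : LocComplex R L} {a b a' b' : C.M} :
    (cone f C).d (a, b) = ((a', b') : C.M × C.M) ↔ C.d a = a' ∧ a - C.d b = b' :=
  Prod.mk_inj

theorem cube_d_eq {x y : R} {C : LocComplex R L} {a b c a' b' c' : C.M} :
    (cube x y C).d (a, b, c) = ((a', b', c') : C.M × C.M × C.M) ↔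
      C.d a = a' ∧ C.d b = b' ∧ b - a - C.d c = c' :=
  Prod.mk_inj.trans (and_congr_right' Prod.mk_inj)

theorem cone_ac_of_dvd {f g : R} (h : f ∣ g) (C : LocComplex R L) (n : ℤ) :
    (cone f C).Ac g n := by
  rintro ⟨a, b⟩ ⟨-, hb⟩ hd
  replace hd := cone_d_eq.mp hd
  rw [sub_eq_zero] at hd
  refine ⟨(b, 0), ⟨?_, zero_mem _⟩, ?_⟩
  · refine C.mono 2 ?_ hb
    rw [sq]
    exact mul_dvd_mul_left g h
  · exact cone_d_eq.mpr ⟨hd.2.symm, by rw [map_zero, sub_zero]⟩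

theorem cone_ac {f g : R} {C : LocComplex R L} {n : ℤ} (h₁ : C.Ac g n)
    (h₂ : C.Ac (g * f) (n - 1)) : (cone f C).Ac g n := by
  rintro ⟨a, b⟩ ⟨ha, hb⟩ hd
  replace hd := cone_d_eq.mp hd
  rw [sub_eq_zero] at hd
  obtain ⟨a', ha', hda⟩ := h₁ a ha hd.1
  obtain ⟨b', hb', hdb⟩ := h₂ (a' - b) (sub_mem (C.F_le_mul _ _ _ ha') hb)
    (by rw [map_sub, hda, hd.2, sub_self])
  exact ⟨(a', b'), ⟨ha', hb'⟩, cone_d_eq.mpr ⟨hda, by rw [hdb, sub_sub_cancel]⟩⟩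

theorem cube_ac {x y g : R} {C : LocComplex R L} {n : ℤ} (h₁ : C.Ac (g * x) n)
    (h₂ : C.Ac (g * y) n) (h₃ : C.Ac (g * x * y) (n - 1)) : (cube x y C).Ac g n := by
  rintro ⟨a, b, c⟩ ⟨ha, hb, hc⟩ hd
  replace hd := cube_d_eq.mp hd
  rw [sub_eq_zero] at hd
  obtain ⟨a', ha', hda⟩ := h₁ a ha hd.1
  obtain ⟨b', hb', hdb⟩ := h₂ b hb hd.2.1
  have hb'' : b' ∈ C.F (g * x * y) (n - 1) := by
    rw [mul_right_comm]
    exact C.F_le_mul _ _ _ hb'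
  obtain ⟨c', hc', hdc⟩ := h₃ (b' - a' - c)
    (sub_mem (sub_mem hb'' (C.F_le_mul _ _ _ ha')) hc)
    (by rw [map_sub, map_sub, hda, hdb, hd.2.2, sub_self])
  exact ⟨(a', b', c'), ⟨ha', hb', hc'⟩, cube_d_eq.mpr ⟨hda, hdb, by rw [hdc, sub_sub_cancel]⟩⟩

theorem cube_ac_of_dvd {x y g : R} (h : x ∣ g ∨ y ∣ g) {C : LocComplex R L} {n : ℤ}
    (hC : C.Ac g n) : (cube x y C).Ac g n := by
  rintro ⟨a, b, c⟩ ⟨ha, hb, hc⟩ hd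
  replace hd := cube_d_eq.mp hd
  rw [sub_eq_zero] at hd
  rcases h with h | h
  · have hsq : ∀ z, g * x * z ∣ (g * z) ^ 2 := fun z => by
      obtain ⟨k, rfl⟩ := h
      exact ⟨k * z, by ring⟩
    obtain ⟨a', ha', hda⟩ := hC a
      (C.mono 2 (by simpa using hsq 1) ha) hd.1
    refine ⟨(a', a' + c, 0), ⟨C.F_le_mul _ _ _ ha', add_mem (C.F_le_mul _ _ _ ha')
      (C.mono 2 (hsq y) hc), zero_mem _⟩, ?_⟩
    exact cube_d_eq.mpr ⟨hda, by rw [map_add, hda, ← hd.2.2, add_sub_cancel],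
      by rw [map_zero, sub_zero, add_sub_cancel_left]⟩
  · have hsq : ∀ z, g * z * y ∣ (g * z) ^ 2 := fun z => by
      obtain ⟨k, rfl⟩ := h
      exact ⟨k * z, by ring⟩
    obtain ⟨b', hb', hdb⟩ := hC b
      (C.mono 2 (by simpa using hsq 1) hb) hd.2.1
    refine ⟨(b' - c, b', 0), ⟨sub_mem (H := C.F (g * x) (n - 1)) (C.F_le_mul _ _ _ hb')
      (C.mono 2 (hsq x) hc),
      C.F_le_mul _ _ _ hb', zero_mem _⟩, ?_⟩
    exact cube_d_eq.mpr ⟨by rw [map_sub, hdb, ← hd.2.2, sub_sub_cancel], hdb,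
      by rw [map_zero, sub_zero, sub_sub_cancel]⟩

/-- An isomorphism of complexes compatible with all localizations. -/
structure Iso (C D : LocComplex R L) where
  e : C.M ≃+ D.M
  d_comm : ∀ x, D.d (e x) = e (C.d x)
  mem_iff : ∀ {g n x}, e x ∈ D.F g n ↔ x ∈ C.F g n

theorem Iso.ac {C D : LocComplex R L} (φ : Iso C D) {g : R} {n : ℤ} (h : D.Ac g n) :
    C.Ac g n := by
  intro x hx hdx
  obtain ⟨y, hy, hdy⟩ := h (φ.e x) (φ.mem_iff.mpr hx) (by rw [φ.d_comm, hdx, map_zero])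
  obtain ⟨z, rfl⟩ := φ.e.surjective y
  exact ⟨z, φ.mem_iff.mp hy, φ.e.injective (by rw [← φ.d_comm, hdy])⟩

/-- Isomorphisms compose. -/
def Iso.trans {C D E : LocComplex R L} (φ : Iso C D) (ψ : Iso D E) : Iso C E where
  e := φ.e.trans ψ.e
  d_comm x := by simp [ψ.d_comm, φ.d_comm]
  mem_iff := ψ.mem_iff.trans φ.mem_iff

/-- The identity isomorphism. -/
def Iso.refl (C : LocComplex R L) : Iso C C where
  e := AddEquiv.refl _
  d_comm _ := rfl
  mem_iff := Iff.rfl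

/-- Functoriality of `cone`. -/
def Iso.cone (f : R) {C D : LocComplex R L} (φ : Iso C D) : Iso (C.cone f) (D.cone f) where
  e := φ.e.prodCongr φ.e
  d_comm := by
    rintro ⟨a, b⟩
    change (D.d (φ.e a), φ.e a - D.d (φ.e b)) = (φ.e (C.d a), φ.e (a - C.d b))
    rw [φ.d_comm, φ.d_comm, map_sub]
  mem_iff := and_congr φ.mem_iff φ.mem_iff

/-- The constructions `cone` and `cube` commute. -/
def coneCube (f x y : R) (C : LocComplex R L) :
    Iso (cone f (cube x y C)) (cube x y (cone f C)) where
  e :=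
    { toFun := fun p => ((p.1.1, p.2.1), (p.1.2.1, p.2.2.1), (p.1.2.2, -p.2.2.2))
      invFun := fun p => ((p.1.1, p.2.1.1, p.2.2.1), (p.1.2, p.2.1.2, -p.2.2.2))
      left_inv := by
        rintro ⟨⟨a, b, c⟩, a', b', c'⟩
        simp only [neg_neg]
        rfl
      right_inv := by
        rintro ⟨⟨a, a'⟩, ⟨b, b'⟩, c, c'⟩
        simp only [neg_neg]
        rfl
      map_add' := by
        rintro ⟨⟨a, b, c⟩, a', b', c'⟩ ⟨⟨u, v, w⟩, u', v', w'⟩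
        change (((a + u, a' + u'), (b + v, b' + v'), (c + w, -(c' + w'))) :
          (C.M × C.M) × (C.M × C.M) × (C.M × C.M)) =
          ((a + u, a' + u'), (b + v, b' + v'), (c + w, -c' + -w'))
        rw [neg_add] }
  d_comm := by
    rintro ⟨⟨a, b, c⟩, a', b', c'⟩
    change (((C.d a, a - C.d a'), (C.d b, b - C.d b'),
      (b - a - C.d c, b' - a' - (c - C.d (-c')))) : (C.M × C.M) × (C.M × C.M) × (C.M × C.M)) =
      ((C.d a, a - C.d a'), (C.d b, b - C.d b'), (b - a - C.d c, -(c - (b' - a' - C.d c'))))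
    rw [map_neg]
    congr 3
    abel
  mem_iff := by
    rintro g n ⟨⟨a, b, c⟩, a', b', c'⟩
    change ((a ∈ C.F (g * x) n ∧ a' ∈ C.F (g * x * f) (n - 1)) ∧
      (b ∈ C.F (g * y) n ∧ b' ∈ C.F (g * y * f) (n - 1)) ∧
      (c ∈ C.F (g * x * y) (n - 1) ∧ -c' ∈ C.F (g * x * y * f) (n - 1 - 1))) ↔
      ((a ∈ C.F (g * x) n ∧ b ∈ C.F (g * y) n ∧ c ∈ C.F (g * x * y) (n - 1)) ∧
      (a' ∈ C.F (g * f * x) (n - 1) ∧ b' ∈ C.F (g * f * y) (n - 1) ∧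
        c' ∈ C.F (g * f * x * y) (n - 1 - 1)))
    rw [neg_mem_iff, mul_right_comm g x f, mul_right_comm g y f,
      show g * x * y * f = g * f * x * y by ring]
    tauto

/-- Iterated `cone`, the localized Koszul complex on `l` with coefficients in `C`. -/
def iterCone : List R → LocComplex R L → LocComplex R L
  | [], C => C
  | f :: l, C => cone f (iterCone l C)

variable (R L) in
/-- Iterated `cube` over `base`. -/
def iterCube : List (R × R) → LocComplex R L
  | [] => base R L
  | p :: ps => cube p.1 p.2 (iterCube ps)

/-- `cube` commutes with `iterCone`. -/
def iterConeCube (x y : R) (C : LocComplex R L) :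
    ∀ l : List R, Iso (iterCone l (cube x y C)) (cube x y (iterCone l C))
  | [] => Iso.refl _
  | f :: l => ((iterConeCube x y C l).cone f).trans (coneCube f x y _)

theorem iterCone_ac_of_dvd {f g : R} (hfg : f ∣ g) (C : LocComplex R L) :
    ∀ {l : List R}, f ∈ l → ∀ n, (iterCone l C).Ac g n := by
  intro l hl
  induction l generalizing g with
  | nil => simp at hl
  | cons f' l ih =>
    intro n
    rcases List.mem_cons.mp hl with rfl | hl
    · exact cone_ac_of_dvd hfg _ n
    · exact cone_ac (ih hfg hl n) (ih (hfg.mul_right _) hl _)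

theorem iterCone_ac [FaithfulSMul R L] {g : R} (hg : g ≠ 0) {l : List R}
    (hgl : g ∈ (Ideal.span {f | f ∈ l}).radical) (C : LocComplex R L) (n : ℤ) :
    (iterCone l C).Ac g n :=
  ac_of_local _ hg hgl fun f hf => iterCone_ac_of_dvd (dvd_mul_left f g) C hf n

theorem iterCone_iterCube_ac [FaithfulSMul R L] [IsDomain R] {g : R} (hg : g ≠ 0) {l : List R}
    {ps : List (R × R)} (hps : ∀ p ∈ ps, p.1 ≠ 0 ∧ p.2 ≠ 0)
    (h : ∀ zs, List.Forall₂ (fun z p => z = p.1 ∨ z = p.2) zs ps →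
      g * zs.prod ∈ (Ideal.span {f | f ∈ l}).radical) (n : ℤ) :
    (iterCone l (iterCube R L ps)).Ac g n := by
  induction ps generalizing g n with
  | nil => exact iterCone_ac hg (by simpa using h [] List.Forall₂.nil) _ n
  | cons p ps ih =>
    have hp := hps p List.mem_cons_self
    have hps' : ∀ q ∈ ps, q.1 ≠ 0 ∧ q.2 ≠ 0 := fun q hq => hps q (List.mem_cons_of_mem _ hq)
    have h₁ : ∀ zs, List.Forall₂ (fun z p => z = p.1 ∨ z = p.2) zs ps →
        g * p.1 * zs.prod ∈ (Ideal.span {f | f ∈ l}).radical := fun zs hzs => by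
      have := h (p.1 :: zs) (List.Forall₂.cons (Or.inl rfl) hzs)
      rwa [List.prod_cons, ← mul_assoc] at this
    have h₂ : ∀ zs, List.Forall₂ (fun z p => z = p.1 ∨ z = p.2) zs ps →
        g * p.2 * zs.prod ∈ (Ideal.span {f | f ∈ l}).radical := fun zs hzs => by
      have := h (p.2 :: zs) (List.Forall₂.cons (Or.inr rfl) hzs)
      rwa [List.prod_cons, ← mul_assoc] at this
    refine (iterConeCube p.1 p.2 _ l).ac (cube_ac (ih (mul_ne_zero hg hp.1) hps' h₁ n)
      (ih (mul_ne_zero hg hp.2) hps' h₂ n)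
      (ih (mul_ne_zero (mul_ne_zero hg hp.1) hp.2) hps' (fun zs hzs => ?_) _))
    rw [mul_right_comm]
    exact Ideal.mul_mem_right _ _ (h₁ zs hzs)

theorem iterCube_ac [FaithfulSMul R L] {ps : List (R × R)} {h : R}
    (hps : ∀ p ∈ ps, h ∈ (Ideal.span {p.1, p.2}).radical) {n : ℤ} (hn : n ≠ 0) :
    (iterCube R L ps).Ac h n := by
  induction ps generalizing h with
  | nil => exact base_ac_of_ne_zero h hn
  | cons p ps ih =>
    have hps' : ∀ c, ∀ q ∈ ps, h * c ∈ (Ideal.span {q.1, q.2}).radical := fun c q hq =>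
      Ideal.mul_mem_right _ _ (hps q (List.mem_cons_of_mem _ hq))
    rcases eq_or_ne h 0 with rfl | h0
    · exact cube_ac_of_dvd (Or.inl (dvd_zero _)) (ih (by simp))
    · refine ac_of_local _ h0 (hps p List.mem_cons_self) ?_
      rintro f (rfl | rfl)
      · exact cube_ac_of_dvd (Or.inl (dvd_mul_left _ _)) (ih (hps' _))
      · exact cube_ac_of_dvd (Or.inr (dvd_mul_left _ _)) (ih (hps' _))

theorem iterCone_ac_of_length_lt {C : LocComplex R L} {g : R} {l : List R} {n : ℤ}
    (hC : ∀ h, ∀ m : ℤ, 0 < m → C.Ac (g * h) m) (hl : l.length < n) :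
    (iterCone l C).Ac g n := by
  induction l generalizing g n with
  | nil => exact mul_one g ▸ hC 1 n (by simpa using hl)
  | cons f l ih =>
    rw [List.length_cons] at hl
    push_cast at hl
    exact cone_ac (ih hC (by omega))
      (ih (fun h m hm => by rw [mul_assoc]; exact hC _ m hm) (by omega))

/-- The projection of an iterated cone. -/
def iterConeProj (C : LocComplex R L) : ∀ l : List R, (iterCone l C).M → C.M
  | [] => id
  | _ :: l => fun x => iterConeProj C l x.1

theorem iterConeProj_d (C : LocComplex R L) (l : List R) (x : (iterCone l C).M) :
    iterConeProj C l ((iterCone l C).d x) = C.d (iterConeProj C l x) := by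
  induction l with
  | nil => rfl
  | cons f l ih => exact ih x.1

theorem iterConeProj_mem (C : LocComplex R L) (l : List R) {g : R} {n : ℤ}
    {x : (iterCone l C).M} (hx : x ∈ (iterCone l C).F g n) : iterConeProj C l x ∈ C.F g n := by
  induction l with
  | nil => exact hx
  | cons f l ih => exact ih hx.1

theorem exists_lift_iterCone {C : LocComplex R L} {g : R} {l : List R} {n : ℤ}
    (hC : ∀ f ∈ l, ∀ h, ∀ m : ℤ, 0 < m → C.Ac (f * h) m) (hl : l.length ≤ n) {e : C.M}
    (he : e ∈ C.F g n) (hde : C.d e = 0) :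
    ∃ x ∈ (iterCone l C).F g n, (iterCone l C).d x = 0 ∧ iterConeProj C l x = e := by
  induction l with
  | nil => exact ⟨e, he, hde, rfl⟩
  | cons f l ih =>
    rw [List.length_cons] at hl
    push_cast at hl
    obtain ⟨x, hx, hdx, hpx⟩ := ih (fun f hf => hC f (List.mem_cons_of_mem _ hf)) (by omega)
    have hac : (iterCone l C).Ac (g * f) n := by
      refine iterCone_ac_of_length_lt (fun h m hm => ?_) (by omega)
      rw [mul_comm g, mul_assoc]
      exact hC f List.mem_cons_self _ m hm
    obtain ⟨b, hb, hdb⟩ := hac x (F_le_mul _ _ _ _ hx) hdx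
    refine ⟨(x, b), ⟨hx, hb⟩, ?_, hpx⟩
    change ((iterCone l C).d x, x - (iterCone l C).d b) = 0
    rw [hdx, hdb, sub_self]
    rfl

/-- If `l` generates, up to radical and localization at `g`, the intersection of the ideals
generated by the pairs in `ps`, and `l` is no longer than `ps`, then `iterCube` is exact in top
degree. -/
theorem iterCube_ac_top [FaithfulSMul R L] [IsDomain R] {g : R} (hg : g ≠ 0) {l : List R}
    {ps : List (R × R)} (hlen : l.length ≤ ps.length) (hps : ∀ p ∈ ps, p.1 ≠ 0 ∧ p.2 ≠ 0)
    (h₁ : ∀ f ∈ l, ∀ p ∈ ps, f ∈ (Ideal.span {p.1, p.2}).radical)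
    (h₂ : ∀ zs, List.Forall₂ (fun z p => z = p.1 ∨ z = p.2) zs ps →
      g * zs.prod ∈ (Ideal.span {f | f ∈ l}).radical) :
    (iterCube R L ps).Ac g ps.length := by
  intro e he hde
  obtain ⟨x, hx, hdx, rfl⟩ := exists_lift_iterCone (l := l)
    (fun f hf h m hm => iterCube_ac
      (fun p hp => Ideal.mul_mem_right h _ (h₁ f hf p hp)) hm.ne') (by exact_mod_cast hlen) he hde
  obtain ⟨y, hy, rfl⟩ := iterCone_iterCube_ac hg hps h₂ _ x hx hdx
  exact ⟨_, iterConeProj_mem _ _ hy, (iterConeProj_d _ _ _).symm⟩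

variable (R L) in
/-- The component of top degree of `iterCube`. -/
def iterCubeTop : ∀ ps : List (R × R), (iterCube R L ps).M → L
  | [] => id
  | _ :: ps => fun x => iterCubeTop ps x.2.2

variable (R L) in
/-- The inclusion of the component of top degree into `iterCube`. -/
def iterCubeInr (u : L) : ∀ ps : List (R × R), (iterCube R L ps).M
  | [] => u
  | _ :: ps => ((0, 0, iterCubeInr u ps) : _ × _ × _)

theorem iterCubeTop_sub (ps : List (R × R)) (x y : (iterCube R L ps).M) :
    iterCubeTop R L ps (x - y) = iterCubeTop R L ps x - iterCubeTop R L ps y := by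
  induction ps with
  | nil => rfl
  | cons p ps ih => exact ih x.2.2 y.2.2

theorem iterCubeTop_inr (u : L) (ps : List (R × R)) :
    iterCubeTop R L ps (iterCubeInr R L u ps) = u := by
  induction ps with
  | nil => rfl
  | cons p ps ih => exact ih

theorem iterCube_d_inr (u : L) (ps : List (R × R)) :
    (iterCube R L ps).d (iterCubeInr R L u ps) = 0 := by
  induction ps with
  | nil => rfl
  | cons p ps ih =>
    change ((iterCube R L ps).d 0, (iterCube R L ps).d 0,
      0 - 0 - (iterCube R L ps).d (iterCubeInr R L u ps)) = 0
    rw [ih, map_zero, sub_zero, sub_zero]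
    rfl

theorem iterCubeInr_mem {u : L} {ps : List (R × R)} {g : R}
    (hu : u ∈ locAt L (g * (ps.map fun p => p.1 * p.2).prod)) :
    iterCubeInr R L u ps ∈ (iterCube R L ps).F g ps.length := by
  induction ps generalizing g with
  | nil => exact (mem_base_F_zero (x := u)).mpr (by simpa using hu)
  | cons p ps ih =>
    refine ⟨zero_mem _, zero_mem _, ?_⟩
    have := ih (g := g * p.1 * p.2) (by simpa [mul_assoc] using hu)
    rw [List.length_cons, Nat.cast_add, Nat.cast_one, add_sub_cancel_right]
    exact this

theorem iterCubeTop_mem {ps : List (R × R)} {g : R} {x : (iterCube R L ps).M}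
    (hx : x ∈ (iterCube R L ps).F g ps.length) :
    iterCubeTop R L ps x ∈ locAt L (g * (ps.map fun p => p.1 * p.2).prod) := by
  induction ps generalizing g with
  | nil =>
    rw [List.map_nil, List.prod_nil, mul_one]
    exact mem_base_F_zero.mp hx
  | cons p ps ih =>
    have := ih (g := g * p.1 * p.2) (x := x.2.2) (by simpa using hx.2.2)
    rw [List.map_cons, List.prod_cons, ← mul_assoc, ← mul_assoc]
    exact this

theorem iterCubeTop_d_mem {ps : List (R × R)} {g P : R}
    (hP : g * (ps.map fun p => p.1 * p.2).prod = P) {N : AddSubgroup L}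
    (hN : ∀ p ∈ ps, ∀ h, h * p.1 = P ∨ h * p.2 = P → locAt L h ≤ N)
    {x : (iterCube R L ps).M} (hx : x ∈ (iterCube R L ps).F g (ps.length - 1)) :
    iterCubeTop R L ps ((iterCube R L ps).d x) ∈ N := by
  induction ps generalizing g with
  | nil => exact zero_mem N
  | cons p ps ih =>
    obtain ⟨a, b, c⟩ := x
    obtain ⟨ha, hb, hc⟩ := hx
    rw [List.map_cons, List.prod_cons] at hP
    simp only [List.length_cons, Nat.cast_add, Nat.cast_one, add_sub_cancel_right] at ha hb hc
    change iterCubeTop R L ps (b - a - (iterCube R L ps).d c) ∈ N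
    rw [iterCubeTop_sub, iterCubeTop_sub]
    refine sub_mem (sub_mem ?_ ?_) ?_
    · refine hN p List.mem_cons_self _ (Or.inl ?_) (iterCubeTop_mem hb)
      rw [← hP]
      ring
    · refine hN p List.mem_cons_self _ (Or.inr ?_) (iterCubeTop_mem ha)
      rw [← hP]
      ring
    · exact ih (by rw [← hP]; ring) (fun q hq => hN q (List.mem_cons_of_mem _ hq)) hc

end LocComplex

/-- If `l` generates, up to radical and localization at `w`, the intersection of the ideals
generated by the pairs in `ps`, and `l` is no longer than `ps`, then the product of the entries of
`ps`, raised to the `k`-th power, lies in the ideal of their `(k + 1)`-st powers after localization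
at `w`. -/
theorem exists_mul_prod_pow_mem {R : Type*} [CommRing R] [IsDomain R] {w : R} (hw : w ≠ 0)
    {l : List R} {ps : List (R × R)} (hlen : l.length ≤ ps.length)
    (hps : ∀ p ∈ ps, p.1 ≠ 0 ∧ p.2 ≠ 0)
    (h₁ : ∀ f ∈ l, ∀ p ∈ ps, f ∈ (Ideal.span {p.1, p.2}).radical)
    (h₂ : ∀ zs, List.Forall₂ (fun z p => z = p.1 ∨ z = p.2) zs ps →
      w * zs.prod ∈ (Ideal.span {f | f ∈ l}).radical) :
    ∃ k : ℕ, w ^ (k + 1) * (ps.map fun p => p.1 * p.2).prod ^ k ∈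
      Ideal.span {a | ∃ p ∈ ps, a = p.1 ^ (k + 1) ∨ a = p.2 ^ (k + 1)} := by
  let L := FractionRing R
  set Q := (ps.map fun p => p.1 * p.2).prod with hQ
  have hQ0 : Q ≠ 0 := by
    rw [hQ]
    refine List.prod_ne_zero fun h => ?_
    obtain ⟨p, hp, h0⟩ := List.mem_map.mp h
    exact mul_ne_zero (hps p hp).1 (hps p hp).2 h0
  have hinj : Function.Injective (algebraMap R L) := IsFractionRing.injective R L
  have hQL : algebraMap R L Q ≠ 0 := fun h => hQ0 (hinj (by rw [h, map_zero]))
  let I : ℕ → Ideal R := fun k => Ideal.span {a | ∃ p ∈ ps, a = p.1 ^ k ∨ a = p.2 ^ k}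
  let N : AddSubgroup L :=
    { carrier := {v | ∃ k₀ : ℕ, ∀ k ≥ k₀, ∃ a ∈ I k,
        algebraMap R L ((w * Q) ^ k) * v = algebraMap R L a}
      add_mem' := by
        rintro u v ⟨i, hi⟩ ⟨j, hj⟩
        refine ⟨max i j, fun k hk => ?_⟩
        obtain ⟨a, ha, hau⟩ := hi k ((le_max_left _ _).trans hk)
        obtain ⟨b, hb, hbv⟩ := hj k ((le_max_right _ _).trans hk)
        exact ⟨a + b, add_mem ha hb, by rw [mul_add, hau, hbv, map_add]⟩
      zero_mem' := ⟨0, fun k _ => ⟨0, zero_mem _, by simp⟩⟩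
      neg_mem' := by
        rintro v ⟨i, hi⟩
        refine ⟨i, fun k hk => ?_⟩
        obtain ⟨a, ha, hav⟩ := hi k hk
        exact ⟨-a, neg_mem ha, by rw [mul_neg, hav, map_neg]⟩ }
  have hN : ∀ z h, (∀ k, z ^ k ∈ I k) → h * z = w * Q → LocComplex.locAt L h ≤ N := by
    rintro z h hz hP v ⟨j, a, ha⟩
    refine ⟨j, fun k hk => ⟨h ^ (k - j) * a * z ^ k, Ideal.mul_mem_left _ _ (hz k), ?_⟩⟩
    rw [map_mul, map_mul, ← ha, ← hP, mul_pow]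
    nth_rewrite 1 [← Nat.sub_add_cancel hk]
    rw [pow_add, map_mul, map_mul]
    ring
  have hu : (algebraMap R L Q)⁻¹ ∈ LocComplex.locAt L (w * Q) :=
    ⟨1, w, by rw [pow_one, map_mul, mul_assoc, mul_inv_cancel₀ hQL, mul_one]⟩
  obtain ⟨x, hx, hdx⟩ := LocComplex.iterCube_ac_top (L := L) hw hlen hps h₁ h₂ _
    (LocComplex.iterCubeInr_mem hu) (LocComplex.iterCube_d_inr _ _)
  have hmem := LocComplex.iterCubeTop_d_mem (P := w * Q) (by rw [hQ]) ?_ hx (N := N)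
  · rw [hdx, LocComplex.iterCubeTop_inr] at hmem
    obtain ⟨k, hk⟩ := hmem
    obtain ⟨a, ha, hav⟩ := hk (k + 1) k.le_succ
    refine ⟨k, ?_⟩
    convert ha using 1
    apply hinj
    rw [← hav, mul_pow, pow_succ Q, ← mul_assoc, map_mul _ _ Q, mul_assoc, mul_inv_cancel₀ hQL,
      mul_one]
  · rintro p hp h (h' | h')
    · exact hN _ h (fun k => Ideal.subset_span ⟨p, hp, Or.inl rfl⟩) h'
    · exact hN _ h (fun k => Ideal.subset_span ⟨p, hp, Or.inr rfl⟩) h'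

end LocalizedComplexes

section LowerBound

variable {K : Type*} [Field K] {n : ℕ} {G : SimpleGraph (Fin n)}

/-- Generating the localized cover ideal up to radical takes more elements than there are pairwise
disconnected edges. -/
theorem HasPairwiseDisconnectedEdges.lt_of_radical_eq {r s : ℕ}
    (hG : HasPairwiseDisconnectedEdges G r) {f : Fin s → SLoc K n}
    (hf : (Ideal.span (Set.range f)).radical =
      ((coverIdeal K G).map (algebraMap (MvPolynomial (Fin n) K) (SLoc K n))).radical) :
    r < s := by
  classical
  by_contra! hsr
  obtain ⟨e, hadj, hdis⟩ := hG
  set φ := algebraMap (MvPolynomial (Fin n) K) (SLoc K n) with hφ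
  have hinj : Function.Injective φ :=
    IsLocalization.injective _ (mIdeal K n).primeCompl_le_nonZeroDivisors
  have : IsDomain (SLoc K n) :=
    IsLocalization.isDomain_localization (mIdeal K n).primeCompl_le_nonZeroDivisors
  have hne : ∀ {p : MvPolynomial (Fin n) K}, p ≠ 0 → φ p ≠ 0 := fun hp h0 =>
    hp (hinj (by rw [h0, map_zero]))
  let ω : Fin n →₀ ℕ := Finsupp.equivFunOnFinite.symm fun v =>
    if ∃ i, v = (e i).1 ∨ v = (e i).2 then 0 else 1
  have hω : ∀ v, ω v = if ∃ i, v = (e i).1 ∨ v = (e i).2 then 0 else 1 := fun _ => rfl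
  let ps := List.ofFn fun i => (φ (X (e i).1), φ (X (e i).2))
  obtain ⟨k, hk⟩ := exists_mul_prod_pow_mem (w := φ (monomial ω 1)) (l := List.ofFn f) (ps := ps)
    (hne (by simp)) (by simpa [ps] using hsr)
    (fun p hp => by
      obtain ⟨i, rfl⟩ := List.mem_ofFn.mp hp
      exact ⟨hne (X_ne_zero _), hne (X_ne_zero _)⟩)
    (fun g hg p hp => by
      obtain ⟨i, rfl⟩ := List.mem_ofFn.mp hp
      obtain ⟨j, rfl⟩ := List.mem_ofFn.mp hg
      have hmem : f j ∈ (Ideal.span (Set.range f)).radical :=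
        Ideal.le_radical (Ideal.subset_span ⟨j, rfl⟩)
      rw [hf] at hmem
      refine Ideal.radical_mono ?_ hmem
      have hle : coverIdeal K G ≤ Ideal.span {X (e i).1, X (e i).2} := by
        refine (iInf₂_le s((e i).1, (e i).2) (hadj i)).trans (Ideal.span_mono ?_)
        rintro _ ⟨v, hv, rfl⟩
        rcases Sym2.mem_iff.mp hv with rfl | rfl <;> simp
      refine (Ideal.map_mono hle).trans ?_
      rw [Ideal.map_span, Set.image_pair])
    (fun zs hzs => by
      obtain ⟨hlen, hz⟩ := List.forall₂_iff_get.mp hzs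
      have hlen' : zs.length = r := by simpa [ps] using hlen
      have hz' : ∀ i : Fin r, ∃ c, (c = (e i).1 ∨ c = (e i).2) ∧
          zs.get (i.cast hlen'.symm) = φ (X c) := by
        intro i
        have := hz i (by simp [hlen']) (by simp [ps])
        simp only [ps, List.get_ofFn] at this
        rcases this with h | h
        · exact ⟨_, Or.inl rfl, h⟩
        · exact ⟨_, Or.inr rfl, h⟩
      choose c hc hzc using hz'
      have hprod : zs.prod = φ (monomial (∑ i, Finsupp.single (c i) 1) 1) := by
        have hzs : zs = List.ofFn fun i : Fin r => φ (X (c i)) := by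
          refine List.ext_get (by simp [hlen']) fun i h₁ h₂ => ?_
          rw [List.get_ofFn]
          exact hzc ⟨i, by omega⟩
        rw [hzs, List.prod_ofFn, ← map_prod, monomial_sum_one]
        rfl
      have hspan : Ideal.span {g | g ∈ List.ofFn f} = Ideal.span (Set.range f) := by
        congr 1
        ext g
        simp
      rw [hspan, hf, hprod, ← map_mul, monomial_mul, one_mul]
      refine Ideal.le_radical (Ideal.mem_map_of_mem _ ?_)
      rw [coverIdeal_eq_kCoverIdeal]
      refine monomial_mem_kCoverIdeal (fun v w hvw => ?_) _
      have hsum : ∀ i, 1 ≤ (∑ j, Finsupp.single (c j) 1 : Fin n →₀ ℕ) (c i) := fun i => by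
        rw [Finsupp.finsetSum_apply]
        refine le_trans ?_ (Finset.single_le_sum (fun _ _ => Nat.zero_le _) (Finset.mem_univ i))
        simp
      simp only [Finsupp.add_apply, hω]
      split_ifs with hv hw hw
      · obtain ⟨i, hi⟩ := hv
        obtain ⟨j, hj⟩ := hw
        have hij : i = j := by
          by_contra hij
          obtain ⟨-, -, -, -, h₁, h₂, h₃, h₄⟩ := hdis i j hij
          rcases hi with rfl | rfl <;> rcases hj with rfl | rfl <;> contradiction
        subst hij
        have hci : c i = v ∨ c i = w := by
          have := hvw.ne
          rcases hi with rfl | rfl <;> rcases hj with rfl | rfl <;> have := hc i <;> tauto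
        have := hsum i
        rcases hci with h | h <;> rw [h] at this <;> omega
      all_goals omega)
  have hps : (ps.map fun p => p.1 * p.2).prod =
      φ (monomial (∑ i, (Finsupp.single (e i).1 1 + Finsupp.single (e i).2 1)) 1) := by
    rw [List.map_ofFn, List.prod_ofFn, monomial_sum_one, map_prod]
    refine Finset.prod_congr rfl fun i _ => ?_
    simp [X, ← map_mul, monomial_mul]
  set β := ∑ i, (Finsupp.single (e i).1 1 + Finsupp.single (e i).2 1) with hβ
  have hβe : ∀ i v, (v = (e i).1 ∨ v = (e i).2) → β v = 1 := by
    intro i v hv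
    rw [hβ, Finsupp.finsetSum_apply, Finset.sum_eq_single i]
    · have := (hadj i).ne
      rcases hv with rfl | rfl
      · simp [this.symm]
      · simp [this]
    · intro j _ hj
      obtain ⟨h₁, h₂, h₃, h₄, -⟩ := hdis j i hj
      rcases hv with rfl | rfl <;> simp [*]
    · simp
  let T : Set (Fin n →₀ ℕ) :=
    {α | ∃ i, α = Finsupp.single (e i).1 (k + 1) ∨ α = Finsupp.single (e i).2 (k + 1)}
  have hT : Ideal.span {a | ∃ p ∈ ps, a = p.1 ^ (k + 1) ∨ a = p.2 ^ (k + 1)} ≤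
      (Ideal.span ((fun α => monomial α (1 : K)) '' T)).map φ := by
    rw [Ideal.span_le]
    rintro _ ⟨p, hp, ha⟩
    obtain ⟨i, rfl⟩ := List.mem_ofFn.mp hp
    simp only [← map_pow, X_pow_eq_monomial] at ha
    rcases ha with rfl | rfl
    · exact Ideal.mem_map_of_mem _ (Ideal.subset_span ⟨_, ⟨i, Or.inl rfl⟩, rfl⟩)
    · exact Ideal.mem_map_of_mem _ (Ideal.subset_span ⟨_, ⟨i, Or.inr rfl⟩, rfl⟩)
  have hk' := hT hk
  rw [hps, ← map_pow φ, ← map_pow φ, ← map_mul φ, monomial_pow, monomial_pow, monomial_mul, one_pow,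
    one_pow, one_mul, hφ,
    IsLocalization.algebraMap_mem_map_algebraMap_iff (mIdeal K n).primeCompl] at hk'
  obtain ⟨δ, hδ, hmem⟩ := hk'
  rw [mem_ideal_span_monomial_image] at hmem
  obtain ⟨α, ⟨i, hα⟩, hle⟩ := hmem ((k + 1) • ω + k • β) (by
    rw [mem_support_iff, coeff_mul_monomial', if_pos le_rfl, tsub_self, mul_one]
    rw [Ideal.mem_primeCompl_iff, mIdeal_eq_ker, RingHom.mem_ker, constantCoeff_eq] at hδ
    exact hδ)
  have key : ∀ v, (v = (e i).1 ∨ v = (e i).2) → α ≠ Finsupp.single v (k + 1) := by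
    rintro v hv rfl
    have h₁ := hle v
    have h₂ : ω v = 0 := by rw [hω, if_pos ⟨i, hv⟩]
    simp [h₂, hβe i v hv] at h₁
  rcases hα with hα | hα
  · exact key _ (Or.inl rfl) hα
  · exact key _ (Or.inr rfl) hα

theorem HasPairwiseDisconnectedEdges.le {r : ℕ} (h : HasPairwiseDisconnectedEdges G r) :
    r ≤ n := by
  obtain ⟨e, -, hdis⟩ := h
  have hinj : Function.Injective fun i => (e i).1 := fun i j hij => by
    by_contra hne
    exact (hdis i j hne).1 hij
  simpa using Fintype.card_le_of_injective _ hinj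

theorem hasPairwiseDisconnectedEdges_max :
    HasPairwiseDisconnectedEdges G (maxPairwiseDisconnected G) :=
  Nat.sSup_mem (s := {r | HasPairwiseDisconnectedEdges G r})
    ⟨0, Fin.elim0, fun i => i.elim0, fun i => i.elim0⟩ ⟨n, fun _ h => h.le⟩

end LowerBound

/-- Let `K` be an infinite field and `G` a graph such that `gdim(G) − 1`
equals the maximum size of a set of pairwise disconnected edges of `G`. Then
`ara(J(G)S_m) = gdim(G)`. -/
theorem ara_coverIdeal_eq_gdim (K : Type*) [Field K] [Infinite K] {n : ℕ}
    (G : SimpleGraph (Fin n)) (hiso : ∀ v : Fin n, ∃ w, G.Adj v w)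
    (h : gdim G - 1 = maxPairwiseDisconnected G) :
    ara ((coverIdeal K G).map (algebraMap (MvPolynomial (Fin n) K) (SLoc K n))) = gdim G := by
  obtain ⟨t, ht, f, hf⟩ := exists_ara_coverIdeal_le (K := K) hiso
  refine le_antisymm (le_trans (Nat.sInf_le ⟨f, hf⟩) ht) (le_csInf ⟨t, f, hf⟩ ?_)
  rintro s ⟨g, hg⟩
  have hlt := hasPairwiseDisconnectedEdges_max.lt_of_radical_eq hg
  omega
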